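/- Let Q be a finite quasigroup and suppose the track φ_k is special. Then φ_k ∘ α = α ∘ φ_k for every automorphism α of Q. -/

import Mathlib

/-! An automorphism `α` conjugates the track of `i` to the track of `α i`. So if the track of `k` is
conjugate to no other track, then `α k = k`, and conjugation by `α` fixes that track. For a finite
quasigroup, conjugacy of permutations amounts to equality of cycle types. -/

/-- `σ` is a track (right middle translation) of `i`. It is encoded as a plain map, so that tracks
can be compared along homomorphisms; left cancellation makes it unique. -/
def IsTrack {Q : Type*} [Mul Q] (σ : Q → Q) (i : Q) : Prop :=
  ∀ x, x * σ x = i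

namespace IsTrack

theorem semiconj {Q R : Type*} [Mul Q] [Mul R] [IsLeftCancelMul R] {σ : Q → Q} {τ : R → R} {i : Q}
    (f : Q →ₙ* R) (hσ : IsTrack σ i) (hτ : IsTrack τ (f i)) : Function.Semiconj f σ τ := by
  intro x
  apply mul_left_cancel (a := f x)
  calc f x * f (σ x) = f (x * σ x) := (map_mul f x (σ x)).symm
    _ = f i := by rw [hσ x]
    _ = f x * τ (f x) := (hτ (f x)).symm

theorem semiconjBy {Q : Type*} [Mul Q] [IsLeftCancelMul Q] {σ τ α : Equiv.Perm Q} {i : Q}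
    (hα : ∀ x y : Q, α (x * y) = α x * α y) (hσ : IsTrack σ i) (hτ : IsTrack τ (α i)) :
    SemiconjBy α σ τ :=
  Equiv.ext (hσ.semiconj ⟨α, hα⟩ hτ)

end IsTrack

theorem special_track_commutes_general {Q : Type*} [Mul Q] [IsLeftCancelMul Q]
    (φ : Q → Equiv.Perm Q) (hφ : ∀ i : Q, IsTrack (φ i) i) (k : Q)
    (hspec : ∀ i : Q, i ≠ k → ¬IsConj (φ i) (φ k))
    (α : Equiv.Perm Q) (hα : ∀ x y : Q, α (x * y) = α x * α y) :
    φ k * α = α * φ k := by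
  have hsemi : SemiconjBy α (φ k) (φ (α k)) := (hφ k).semiconjBy hα (hφ (α k))
  have hconj : IsConj (φ k) (φ (α k)) := ⟨toUnits α, hsemi⟩
  have hfix : α k = k := by_contra fun hne => hspec (α k) hne hconj.symm
  rw [hfix] at hsemi
  exact hsemi.eq.symm

/-- If the track `φ k` of a finite quasigroup is special, then
`φ k ∘ α = α ∘ φ k` for every automorphism `α`. -/
theorem special_track_commutes {Q : Type*} [Fintype Q] [DecidableEq Q] [Mul Q]
    (hL : ∀ a : Q, Function.Bijective (fun x : Q => a * x))
    (hR : ∀ a : Q, Function.Bijective (fun x : Q => x * a))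
    (φ : Q → Equiv.Perm Q)
    (hφ : ∀ i x : Q, x * φ i x = i)
    (k : Q)
    (hspec : ∀ i : Q, i ≠ k → (φ i).cycleType ≠ (φ k).cycleType)
    (α : Equiv.Perm Q)
    (hα : ∀ x y : Q, α (x * y) = α x * α y) :
    φ k * α = α * φ k := by
  have : IsLeftCancelMul Q := ⟨fun a => (hL a).injective⟩
  exact special_track_commutes_general φ hφ k
    (fun i hi hconj => hspec i hi (Equiv.Perm.isConj_iff_cycleType_eq.mp hconj)) α hα
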